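/- For all integers n ≥ 1 and m ≥ 1, A_{n,m} strictly interlaces A_{n+1,m}: A_{n+1,m} has degree n+1 with roots a_1 < ⋯ < a_{n+1} (all real, negative, simple), A_{n,m} has degree n with roots b_1 < ⋯ < b_n, and a_1 < b_1 < a_2 < b_2 < ⋯ < b_n < a_{n+1}. -/

import Mathlib

open Polynomial

noncomputable section

/-- The polylogarithm of negative integer order: `Li_{−n}(t) = ∑_{k=1}^∞ k^n t^k`
(the `k = 0` term vanishes for `n ≥ 1`). -/
def fbhLi (n : ℕ) (t : ℂ) : ℂ := ∑' k : ℕ, (k : ℂ) ^ n * t ^ k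


/-- The recursively defined polynomials `A_{n,m}`. -/
def fbhA (m : ℕ) : ℕ → ℝ[X]
  | 0 => C (m.factorial : ℝ)
  | n + 1 => X * derivative (fbhA m n) - X * (X * derivative (fbhA m n))
      + (C (m : ℝ) * fbhA m n + C ((n : ℝ) + 1) * (X * fbhA m n))

lemma fbhA_deg (m n : ℕ) : (fbhA m n).natDegree ≤ n ∧ (fbhA m n).coeff n = m.factorial := by
  induction n with
  | zero => simp [fbhA]
  | succ n ih =>
    obtain ⟨h1, h2⟩ := ih
    have hX : (X * derivative (fbhA m n)).natDegree ≤ n := by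
      rw [natDegree_le_iff_coeff_eq_zero]
      intro N hN
      obtain ⟨N, rfl⟩ : ∃ k, N = k + 1 := ⟨N - 1, by omega⟩
      rw [coeff_X_mul, coeff_derivative, coeff_eq_zero_of_natDegree_lt (by omega), zero_mul]
    have hXn : (X * derivative (fbhA m n)).coeff n = (n : ℝ) * (m.factorial : ℝ) := by
      rcases n with _ | n
      · simp
      · rw [coeff_X_mul, coeff_derivative, h2]; push_cast; ring
    constructor
    · rw [fbhA, natDegree_le_iff_coeff_eq_zero]
      intro N hN
      obtain ⟨N, rfl⟩ : ∃ k, N = k + 1 := ⟨N - 1, by omega⟩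
      simp only [coeff_add, coeff_sub, coeff_C_mul]
      rw [coeff_X_mul (p := X * derivative _), coeff_X_mul (p := fbhA m n),
        coeff_eq_zero_of_natDegree_lt (p := X * derivative _) (by omega),
        coeff_eq_zero_of_natDegree_lt (p := X * derivative _) (by omega),
        coeff_eq_zero_of_natDegree_lt (p := fbhA m n) (by omega),
        coeff_eq_zero_of_natDegree_lt (p := fbhA m n) (by omega)]
      simp
    · rw [fbhA]
      simp only [coeff_add, coeff_sub, coeff_C_mul]
      rw [coeff_X_mul (p := X * derivative _), coeff_X_mul (p := fbhA m n), hXn, h2,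
        coeff_eq_zero_of_natDegree_lt (p := X * derivative _) (by omega),
        coeff_eq_zero_of_natDegree_lt (p := fbhA m n) (by omega)]
      ring

lemma fbhA_natDegree (m n : ℕ) : (fbhA m n).natDegree = n := by
  apply natDegree_eq_of_le_of_coeff_ne_zero (fbhA_deg m n).1
  rw [(fbhA_deg m n).2]
  exact_mod_cast m.factorial_ne_zero

lemma fbhA_lead (m n : ℕ) : (fbhA m n).leadingCoeff = m.factorial := by
  rw [leadingCoeff, fbhA_natDegree, (fbhA_deg m n).2]

lemma sign_prod {n : ℕ} (b : Fin n → ℝ) (hb : StrictMono b) (i : Fin n) :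
    0 < (-1 : ℝ) ^ (n - 1 - (i : ℕ)) * ∏ j ∈ Finset.univ.erase i, (b i - b j) := by
  have h : ∀ j ∈ Finset.univ.erase i, b i - b j = (if i < j then -1 else 1) * |b i - b j| := by
    intro j hj
    have hne : j ≠ i := Finset.ne_of_mem_erase hj
    split_ifs with hij
    · rw [abs_of_neg (by linarith [hb hij])]; ring
    · rw [abs_of_pos (by linarith [hb (lt_of_le_of_ne (not_lt.1 hij) hne)])]; ring
  rw [Finset.prod_congr rfl h, Finset.prod_mul_distrib, Finset.prod_ite]
  have hf : (Finset.univ.erase i).filter (fun j => i < j) = Finset.Ioi i := by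
    ext j
    simp only [Finset.mem_filter, Finset.mem_erase, Finset.mem_univ, Finset.mem_Ioi]
    exact ⟨fun h => h.2, fun h => ⟨⟨h.ne', trivial⟩, h⟩⟩
  rw [hf, Finset.prod_const, Fin.card_Ioi, Finset.prod_const_one, mul_one, ← mul_assoc,
    ← mul_pow]
  norm_num
  apply Finset.prod_pos
  intro j hj
  have hne : j ≠ i := Finset.ne_of_mem_erase hj
  exact abs_pos.2 (sub_ne_zero.2 (fun h => hne (hb.injective h).symm))

lemma deriv_at_root {n : ℕ} (b : Fin n → ℝ) (c : ℝ) (i : Fin n) :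
    eval (b i) (derivative (C c * ∏ i, (X - C (b i)))) =
      c * ∏ j ∈ Finset.univ.erase i, (b i - b j) := by
  rw [derivative_C_mul, derivative_prod_finset, eval_C_mul, eval_finsetSum,
    Finset.sum_eq_single i]
  · simp [eval_prod]
  · intro j _ hj
    rw [eval_mul, eval_prod, Finset.prod_eq_zero (i := i)]
    · simp
    · simp [hj.symm]
    · simp
  · simp

lemma sign_atBot (Q : ℝ[X]) (n : ℕ) (hd : Q.natDegree = n + 1) (hl : 0 < Q.leadingCoeff)
    (M : ℝ) : ∃ x < M, 0 < (-1 : ℝ) ^ (n + 1) * eval x Q := by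
  let R := C ((-1 : ℝ) ^ (n + 1)) * Q.comp (-X)
  have hR : R.natDegree = n + 1 := by
    simp only [R]
    rw [natDegree_C_mul (by simp), natDegree_comp, natDegree_neg, natDegree_X, hd, mul_one]
  have hRl : R.leadingCoeff = Q.leadingCoeff := by
    simp only [R]
    rw [leadingCoeff_mul, leadingCoeff_C, leadingCoeff_comp (by simp), hd, leadingCoeff_neg,
      leadingCoeff_X, mul_left_comm, ← mul_pow]
    simp
  have ht := R.tendsto_atTop_of_leadingCoeff_nonneg
    (natDegree_pos_iff_degree_pos.1 (by omega)) (by rw [hRl]; exact hl.le)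
  obtain ⟨y, hy1, hy2⟩ := ((ht.eventually_gt_atTop 0).and
    (Filter.eventually_gt_atTop (-M))).exists
  refine ⟨-y, by linarith, ?_⟩
  simpa [R, eval_comp] using hy1

lemma factor_of_roots {n : ℕ} (Q : ℝ[X]) (a : Fin n → ℝ) (ha : StrictMono a)
    (hd : Q.natDegree = n) (hr : ∀ i, eval (a i) Q = 0) :
    Q = C Q.leadingCoeff * ∏ i, (X - C (a i)) := by
  apply eq_leadingCoeff_mul_of_monic_of_dvd_of_natDegree_le
  · exact monic_prod_of_monic _ _ fun i _ => monic_X_sub_C _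
  · exact Fintype.prod_dvd_of_coprime (pairwise_coprime_X_sub_C ha.injective)
      fun i => dvd_iff_isRoot.2 (hr i)
  · rw [natDegree_prod_of_monic _ _ fun i _ => monic_X_sub_C _]
    simp [hd]

lemma ivt_sign (Q : ℝ[X]) (x y : ℝ) (hxy : x < y) (k : ℕ)
    (hx : 0 < (-1 : ℝ) ^ (k + 1) * eval x Q) (hy : 0 < (-1 : ℝ) ^ k * eval y Q) :
    ∃ z, x < z ∧ z < y ∧ eval z Q = 0 := by
  have hc : ContinuousOn (fun z => (-1 : ℝ) ^ k * eval z Q) (Set.Icc x y) := by fun_prop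
  obtain ⟨z, hz, hz0⟩ := intermediate_value_Ioo hxy.le hc
    (show (0 : ℝ) ∈ _ from ⟨by rw [pow_succ] at hx; linarith, hy⟩)
  exact ⟨z, hz.1, hz.2, by simpa using hz0⟩

/-- Nodes with alternating signs give interlacing roots. -/
lemma step_roots {n m : ℕ} (hm : 1 ≤ m) (b : Fin n → ℝ) (hb : StrictMono b)
    (hneg : ∀ i, b i < 0)
    (hP : fbhA m n = C (fbhA m n).leadingCoeff * ∏ i, (X - C (b i))) :
    ∃ a : Fin (n + 1) → ℝ, StrictMono a ∧ (∀ i, a i < 0) ∧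
      fbhA m (n + 1) = C (fbhA m (n + 1)).leadingCoeff * ∏ i, (X - C (a i)) ∧
      ∀ i : Fin n, a i.castSucc < b i ∧ b i < a i.succ := by
  have hc : 0 < (fbhA m n).leadingCoeff := by
    rw [fbhA_lead]; exact_mod_cast m.factorial_pos
  have hc' : 0 < (fbhA m (n + 1)).leadingCoeff := by
    rw [fbhA_lead]; exact_mod_cast m.factorial_pos
  have hev : ∀ x, eval x (fbhA m (n + 1)) = x * (1 - x) * eval x (derivative (fbhA m n)) +
      (m + (n + 1) * x) * eval x (fbhA m n) := by
    intro x
    rw [fbhA]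
    simp only [eval_add, eval_sub, eval_mul, eval_X, eval_C]
    ring
  have hroot : ∀ i, eval (b i) (fbhA m n) = 0 := by
    intro i
    rw [hP, eval_mul, eval_prod, Finset.prod_eq_zero (Finset.mem_univ i) (by simp), mul_zero]
  have hmid : ∀ i : Fin n, 0 < (-1 : ℝ) ^ (n - i) * eval (b i) (fbhA m (n + 1)) := by
    intro i
    have hi := i.2
    have e : n - (i : ℕ) = (n - 1 - i) + 1 := by omega
    have hd := deriv_at_root b (fbhA m n).leadingCoeff i
    rw [← hP] at hd
    rw [hev, hroot, hd, e]
    have h1 := mul_pos hc (sign_prod b hb i)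
    have h2 : 0 < -(b i) * (1 - b i) := mul_pos (by linarith [hneg i]) (by linarith [hneg i])
    have h3 := mul_pos h1 h2
    rw [pow_succ]
    linarith
  have h0 : 0 < eval 0 (fbhA m (n + 1)) := by
    rw [hev, hP, eval_mul, eval_prod]
    have : 0 < ∏ i, eval 0 (X - C (b i)) := Finset.prod_pos fun i _ => by simpa using hneg i
    have hm' : (0 : ℝ) < m := by exact_mod_cast hm
    simp only [eval_C]
    have := mul_pos hm' (mul_pos hc this)
    linarith
  obtain ⟨M, hM⟩ : ∃ M : ℝ, M ≤ 0 ∧ ∀ i, M ≤ b i := by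
    rcases n with _ | n
    · exact ⟨0, le_rfl, fun i => i.elim0⟩
    · exact ⟨b 0, (hneg 0).le, fun i => hb.monotone (Fin.zero_le i)⟩
  obtain ⟨x0, hx0, hs0⟩ := sign_atBot (fbhA m (n + 1)) n (fbhA_natDegree _ _) hc' M
  -- left and right endpoints
  let l : Fin (n + 1) → ℝ := Fin.cons x0 b
  let r : Fin (n + 1) → ℝ := Fin.snoc b 0
  have hl : ∀ i : Fin (n + 1), 0 < (-1 : ℝ) ^ (n - (i : ℕ) + 1) * eval (l i) (fbhA m (n + 1)) := by
    intro i
    refine Fin.cases ?_ (fun j => ?_) i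
    · simpa [l] using hs0
    · have hj := j.2
      have e : n - ((j.succ : Fin (n + 1)) : ℕ) + 1 = n - j := by
        rw [Fin.val_succ]; omega
      rw [e]
      simpa [l] using hmid j
  have hr : ∀ i : Fin (n + 1), 0 < (-1 : ℝ) ^ (n - (i : ℕ)) * eval (r i) (fbhA m (n + 1)) := by
    intro i
    refine Fin.lastCases ?_ (fun j => ?_) i
    · simpa [r] using h0
    · simpa [r] using hmid j
  have hr0 : ∀ i, r i ≤ 0 := by
    intro i
    refine Fin.lastCases ?_ (fun j => ?_) i
    · simp [r]
    · simpa [r] using (hneg j).le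
  have hlr : ∀ i, l i < r i := by
    intro i
    refine Fin.cases ?_ (fun j => ?_) i
    · have : M ≤ r 0 := by
        refine Fin.lastCases (motive := fun i => M ≤ r i) ?_ (fun j => ?_) 0
        · simpa [r] using hM.1
        · simpa [r] using hM.2 j
      simpa [l] using lt_of_lt_of_le hx0 this
    · simp only [l, Fin.cons_succ]
      rcases Fin.eq_castSucc_or_eq_last j.succ with ⟨k, hk⟩ | hk
      · rw [hk]
        simp only [r, Fin.snoc_castSucc]
        apply hb
        have := congrArg Fin.val hk
        simp at this
        rw [Fin.lt_def]; omega
      · rw [hk]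
        simpa [r] using hneg j
  choose a ha1 ha2 ha3 using fun i => ivt_sign _ (l i) (r i) (hlr i) _ (hl i) (hr i)
  have hint : ∀ i : Fin n, a i.castSucc < b i ∧ b i < a i.succ := by
    intro i
    refine ⟨?_, ?_⟩
    · simpa [r] using ha2 i.castSucc
    · simpa [l] using ha1 i.succ
  have hmono : StrictMono a := Fin.strictMono_iff_lt_succ.2 fun i =>
    (hint i).1.trans (hint i).2
  exact ⟨a, hmono, fun i => lt_of_lt_of_le (ha2 i) (hr0 i),
    factor_of_roots _ a hmono (fbhA_natDegree _ _) ha3, hint⟩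

lemma fbhA_roots {m : ℕ} (hm : 1 ≤ m) (n : ℕ) : ∃ b : Fin n → ℝ, StrictMono b ∧
    (∀ i, b i < 0) ∧ fbhA m n = C (fbhA m n).leadingCoeff * ∏ i, (X - C (b i)) := by
  induction n with
  | zero => exact ⟨fun i => i.elim0, fun i => i.elim0, fun i => i.elim0, by
      rw [fbhA_lead]; simp [fbhA]⟩
  | succ n ih =>
    obtain ⟨b, h1, h2, h3⟩ := ih
    obtain ⟨a, h4, h5, h6, -⟩ := step_roots hm b h1 h2 h3
    exact ⟨a, h4, h5, h6⟩

/-! Analytic part. -/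

lemma fbhLi_aux (n : ℕ) (t : ℂ) (ht : ‖t‖ < 1) :
    DifferentiableAt ℂ (fbhLi n) t ∧ fbhLi (n + 1) t = t * deriv (fbhLi n) t := by
  obtain ⟨r, hr1, hr2⟩ := exists_between ht
  have hr0 : 0 ≤ r := (norm_nonneg t).trans hr1.le
  have hu : Summable fun k : ℕ => ‖((k : ℝ) ^ n * r ^ k : ℝ)‖ :=
    summable_norm_pow_mul_geometric_of_norm_lt_one n (by rwa [Real.norm_of_nonneg hr0])
  have hf : ∀ k : ℕ, DifferentiableOn ℂ (fun w : ℂ => (k : ℂ) ^ n * w ^ k)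
      (Metric.ball 0 r) := fun k => by fun_prop
  have hle : ∀ (k : ℕ) (w : ℂ), w ∈ Metric.ball (0 : ℂ) r →
      ‖(k : ℂ) ^ n * w ^ k‖ ≤ ‖((k : ℝ) ^ n * r ^ k : ℝ)‖ := by
    intro k w hw
    have hw' : ‖w‖ ≤ r := by simpa using (mem_ball_zero_iff.1 hw).le
    rw [norm_mul, norm_mul, norm_pow, norm_pow, norm_pow, norm_pow, Real.norm_of_nonneg hr0]
    simp only [Complex.norm_natCast, Real.norm_natCast]
    gcongr
  have hmem : t ∈ Metric.ball (0 : ℂ) r := by simpa using hr1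
  refine ⟨(Complex.differentiableOn_tsum_of_summable_norm hu hf Metric.isOpen_ball hle).differentiableAt
    (Metric.isOpen_ball.mem_nhds hmem), ?_⟩
  have hs := (Complex.hasSum_deriv_of_summable_norm hu hf Metric.isOpen_ball hle hmem).mul_left t
  change _ = t * deriv (fun w : ℂ => ∑' k : ℕ, (k : ℂ) ^ n * w ^ k) t
  rw [← hs.tsum_eq, fbhLi]
  congr 1
  ext k
  rw [deriv_const_mul _ (by fun_prop), deriv_pow_field]
  rcases k with _ | k
  · simp
  · simp only [Nat.add_sub_cancel]; ring

lemma ball_ev {p : ℂ → Prop} (h : ∀ t : ℂ, ‖t‖ < 1 → p t) (t : ℂ) (ht : ‖t‖ < 1) :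
    ∀ᶠ s in nhds t, p s := by
  filter_upwards [Metric.isOpen_ball.mem_nhds (mem_ball_zero_iff.2 ht)] with s hs
  exact h s (mem_ball_zero_iff.1 hs)

lemma fbhLi_iter_diff (n m : ℕ) (t : ℂ) (ht : ‖t‖ < 1) :
    DifferentiableAt ℂ (iteratedDeriv m (fbhLi n)) t := by
  have hd : DifferentiableOn ℂ (fbhLi n) (Metric.ball 0 1) := fun s hs =>
    (fbhLi_aux n s (mem_ball_zero_iff.1 hs)).1.differentiableWithinAt
  have ha : AnalyticAt ℂ (fbhLi n) t :=
    hd.analyticAt (Metric.isOpen_ball.mem_nhds (mem_ball_zero_iff.2 ht))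
  rw [iteratedDeriv_eq_iterate]
  exact (ha.iterated_deriv m).differentiableAt

lemma fbhLi_iter (n m : ℕ) : ∀ t : ℂ, ‖t‖ < 1 → iteratedDeriv m (fbhLi (n + 1)) t =
    t * iteratedDeriv (m + 1) (fbhLi n) t + m * iteratedDeriv m (fbhLi n) t := by
  induction m with
  | zero =>
    intro t ht
    simpa using (fbhLi_aux n t ht).2
  | succ m ih =>
    intro t ht
    have he : iteratedDeriv m (fbhLi (n + 1)) =ᶠ[nhds t] fun t =>
      t * iteratedDeriv (m + 1) (fbhLi n) t + m * iteratedDeriv m (fbhLi n) t := ball_ev ih t ht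
    have h1 := (fbhLi_iter_diff n (m + 1) t ht).hasDerivAt
    have h0 := (fbhLi_iter_diff n m t ht).hasDerivAt
    rw [← iteratedDeriv_succ] at h1 h0
    rw [iteratedDeriv_succ, he.deriv_eq,
      (((hasDerivAt_id' t).fun_mul h1).fun_add (h0.const_mul (m : ℂ))).deriv]
    push_cast
    ring

lemma one_sub_ne {t : ℂ} (ht : ‖t‖ < 1) : 1 - t ≠ 0 := by
  intro h
  rw [← sub_eq_zero.1 h] at ht
  simp at ht

lemma fbhLi_zero (m : ℕ) : ∀ t : ℂ, ‖t‖ < 1 →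
    iteratedDeriv m (fbhLi 0) t = m.factorial / (1 - t) ^ (m + 1) := by
  induction m with
  | zero =>
    intro t ht
    simp [fbhLi, tsum_geometric_of_norm_lt_one ht]
  | succ m ih =>
    intro t ht
    have he : iteratedDeriv m (fbhLi 0) =ᶠ[nhds t] _ := ball_ev ih t ht
    have h1 := one_sub_ne ht
    have hd := (hasDerivAt_const t (m.factorial : ℂ)).fun_div
      (((hasDerivAt_id' t).const_sub 1).fun_pow (m + 1)) (pow_ne_zero _ h1)
    rw [iteratedDeriv_succ, he.deriv_eq, hd.deriv, Nat.factorial_succ]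
    push_cast
    field_simp
    ring

lemma fbhLi_eq (n m : ℕ) : ∀ t : ℂ, ‖t‖ < 1 →
    iteratedDeriv m (fbhLi n) t = aeval t (fbhA m n) / (1 - t) ^ (n + m + 1) := by
  induction n with
  | zero =>
    intro t ht
    rw [fbhLi_zero m t ht]
    simp [fbhA]
  | succ n ih =>
    intro t ht
    have he : iteratedDeriv m (fbhLi n) =ᶠ[nhds t] _ := ball_ev ih t ht
    have h1 := one_sub_ne ht
    have hd := ((fbhA m n).hasDerivAt_aeval t).fun_div
      (((hasDerivAt_id' t).const_sub 1).fun_pow (n + m + 1)) (pow_ne_zero _ h1)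
    rw [fbhLi_iter n m t ht, iteratedDeriv_succ, he.deriv_eq, hd.deriv, ih t ht, fbhA]
    simp only [map_add, map_sub, map_mul, aeval_X, aeval_C, Nat.add_sub_cancel]
    have e : n + 1 + m + 1 = (n + m) + 2 := by ring
    rw [e]
    push_cast
    field_simp
    ring

lemma fbhA_unique (n m : ℕ) (P : ℝ[X])
    (hP : ∀ t : ℂ, ‖t‖ < 1 →
      iteratedDeriv m (fbhLi n) t = Polynomial.aeval t P / (1 - t) ^ (n + m + 1)) :
    P = fbhA m n := by
  apply eq_of_infinite_eval_eq
  refine (Set.Ioo_infinite (show (0 : ℝ) < 1 by norm_num)).mono ?_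
  intro x hx
  have hx1 : ‖(x : ℂ)‖ < 1 := by
    rw [Complex.norm_real, Real.norm_of_nonneg hx.1.le]; exact hx.2
  have h := (hP x hx1).symm.trans (fbhLi_eq n m x hx1)
  rw [div_left_inj' (pow_ne_zero _ (one_sub_ne hx1))] at h
  have e : ∀ R : ℝ[X], aeval (x : ℂ) R = ((eval x R : ℝ) : ℂ) := fun R => by
    have := aeval_algebraMap_apply ℂ x R
    simpa using this
  rw [e, e] at h
  exact_mod_cast h

/-- For `n, m ≥ 1`, `A_{n,m}` (here `P`, of degree `n`) strictly interlaces `A_{n+1,m}`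
(here `Q`, of degree `n+1`), where `A_{n,m}` is characterized by
`(d^m/dt^m) Li_{−n}(t) = A_{n,m}(t)/(1−t)^{n+m+1}` on the unit disk: `Q` has real,
negative, simple roots `a 0 < ⋯ < a n`, `P` has real, negative, simple roots
`b 0 < ⋯ < b (n-1)`, and `a 0 < b 0 < a 1 < b 1 < ⋯ < b (n-1) < a n`. -/
theorem statement18 (n m : ℕ) (hn : 1 ≤ n) (hm : 1 ≤ m) (P Q : Polynomial ℝ)
    (hPdeg : P.natDegree = n) (hQdeg : Q.natDegree = n + 1)
    (hP : ∀ t : ℂ, ‖t‖ < 1 →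
      iteratedDeriv m (fbhLi n) t = Polynomial.aeval t P / (1 - t) ^ (n + m + 1))
    (hQ : ∀ t : ℂ, ‖t‖ < 1 →
      iteratedDeriv m (fbhLi (n + 1)) t = Polynomial.aeval t Q / (1 - t) ^ ((n + 1) + m + 1)) :
    ∃ (a : Fin (n + 1) → ℝ) (b : Fin n → ℝ), StrictMono a ∧ StrictMono b ∧
      (∀ i, a i < 0) ∧ (∀ i, b i < 0) ∧
      Q = C Q.leadingCoeff * ∏ i, (X - C (a i)) ∧
      P = C P.leadingCoeff * ∏ i, (X - C (b i)) ∧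
      ∀ i : Fin n, a i.castSucc < b i ∧ b i < a i.succ := by
  obtain rfl := fbhA_unique n m P hP
  obtain rfl := fbhA_unique (n + 1) m Q hQ
  obtain ⟨b, h1, h2, h3⟩ := fbhA_roots hm n
  obtain ⟨a, h4, h5, h6, h7⟩ := step_roots hm b h1 h2 h3
  exact ⟨a, b, h4, h1, h5, h2, h6, h3, h7⟩
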